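/- Let S = ⟨S, δ, L⟩ and S' = ⟨S', δ', L'⟩ be image-finite FLTSs that are moreover witnessed w.r.t. fposΔPDL, and let x ∈ S, x' ∈ S'. Then the following are equivalent: (i) φ^S(x) ≤ φ^S'(x') for all formulas φ of fposΔPDL; (ii) there exists a crisp directed simulation Z between S and S' with Z(x,x'); (iii) φ^S(x) ≤ φ^S'(x') for all formulas φ of fposΔK. -/

import Mathlib

open unitInterval

noncomputable section
attribute [local instance] Classical.propDecidable

instance : Fact ((0:ℝ) ≤ 1) := ⟨zero_le_one⟩

/-- A left-continuous t-norm on the unit interval `[0,1]`: a commutative, associative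
binary operation with neutral element `1`, increasing in both arguments, that
distributes over suprema of nonempty sets (left-continuity). -/
structure Tnorm where
  mul : I → I → I
  mul_comm : ∀ x y, mul x y = mul y x
  mul_assoc : ∀ x y z, mul (mul x y) z = mul x (mul y z)
  mul_one : ∀ x, mul x 1 = x
  mul_le_mul : ∀ {a b c d : I}, a ≤ b → c ≤ d → mul a c ≤ mul b d
  left_continuous : ∀ (x : I) (s : Set I), s.Nonempty → mul x (sSup s) = sSup (mul x '' s)

/-- The residuum of a t-norm: `(x ⇒ y) = sup {z | z ⊗ x ≤ y}`. -/
def Tnorm.res (T : Tnorm) (x y : I) : I := sSup {z : I | T.mul z x ≤ y}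

/-- A fuzzy labeled transition system over actions `A`, propositions `P`, states `St`. -/
structure FLTS (A P St : Type) where
  delta : St → A → St → I
  label : St → P → I

/-- A crisp directed simulation between two FLTSs. -/
def IsDirSimulation {A P S S' : Type} (M : FLTS A P S) (M' : FLTS A P S')
    (Z : S → S' → Prop) : Prop :=
  (∀ x x', Z x x' → ∀ p, M.label x p ≤ M'.label x' p) ∧
  (∀ x y x' (ρ : A), Z x x' → 0 < M.delta x ρ y →
    ∃ y', M.delta x ρ y ≤ M'.delta x' ρ y' ∧ Z y y') ∧
  (∀ x x' y' (ρ : A), Z x x' → 0 < M'.delta x' ρ y' →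
    ∃ y, M'.delta x' ρ y' ≤ M.delta x ρ y ∧ Z y y')

mutual
/-- Formulas of fposΔPDL. -/
inductive PForm (A P : Type) : Type
  | const : I → PForm A P
  | prop : P → PForm A P
  | baaz : PForm A P → PForm A P
  | and : PForm A P → PForm A P → PForm A P
  | or : PForm A P → PForm A P → PForm A P
  | impl : I → PForm A P → PForm A P
  | dia : PEProg A P → PForm A P → PForm A P
  | box : PUProg A P → PForm A P → PForm A P
/-- Programs of fpos∃ΔPDL. -/
inductive PEProg (A P : Type) : Type
  | act : A → PEProg A P
  | comp : PEProg A P → PEProg A P → PEProg A P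
  | union : PEProg A P → PEProg A P → PEProg A P
  | star : PEProg A P → PEProg A P
  | test : PForm A P → PEProg A P
/-- Programs of fpos∀ΔPDL; `testImp φ a` is the program `(φ→a)?`. -/
inductive PUProg (A P : Type) : Type
  | act : A → PUProg A P
  | comp : PUProg A P → PUProg A P → PUProg A P
  | union : PUProg A P → PUProg A P → PUProg A P
  | star : PUProg A P → PUProg A P
  | testImp : PForm A P → I → PUProg A P
end

/-- The ⊗-product of the values of `r` along the path `x :: l`. -/
def chainProd (T : Tnorm) {St : Type} (r : St → St → I) : St → List St → I
  | _, [] => 1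
  | x, y :: l => T.mul (r x y) (chainProd T r y l)

mutual
/-- Semantics of fposΔPDL formulas. -/
def pformSem (T : Tnorm) {A P St : Type} (M : FLTS A P St) : PForm A P → St → I
  | .const a, _ => a
  | .prop p, x => M.label x p
  | .baaz φ, x => if pformSem T M φ x = 1 then 1 else 0
  | .and φ ψ, x => min (pformSem T M φ x) (pformSem T M ψ x)
  | .or φ ψ, x => max (pformSem T M φ x) (pformSem T M ψ x)
  | .impl a φ, x => T.res a (pformSem T M φ x)
  | .dia α φ, x => ⨆ y, T.mul (peSem T M α x y) (pformSem T M φ y)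
  | .box γ φ, x => ⨅ y, T.res (puSem T M γ x y) (pformSem T M φ y)
/-- Semantics of fpos∃ΔPDL programs. -/
def peSem (T : Tnorm) {A P St : Type} (M : FLTS A P St) : PEProg A P → St → St → I
  | .act ρ, x, y => M.delta x ρ y
  | .comp α β, x, y => ⨆ z, T.mul (peSem T M α x z) (peSem T M β z y)
  | .union α β, x, y => max (peSem T M α x y) (peSem T M β x y)
  | .star α, x, y =>
      sSup {v : I | ∃ l : List St, l.getLastD x = y ∧ v = chainProd T (peSem T M α) x l}
  | .test φ, x, y => if x = y then pformSem T M φ x else 0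
/-- Semantics of fpos∀ΔPDL programs. -/
def puSem (T : Tnorm) {A P St : Type} (M : FLTS A P St) : PUProg A P → St → St → I
  | .act ρ, x, y => M.delta x ρ y
  | .comp α β, x, y => ⨆ z, T.mul (puSem T M α x z) (puSem T M β z y)
  | .union α β, x, y => max (puSem T M α x y) (puSem T M β x y)
  | .star α, x, y =>
      sSup {v : I | ∃ l : List St, l.getLastD x = y ∧ v = chainProd T (puSem T M α) x l}
  | .testImp φ a, x, y => if x = y then T.res (pformSem T M φ x) a else 0
end

/-- An FLTS is witnessed w.r.t. fposΔPDL: every supremum (resp. infimum) occurring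
in the semantic clauses is attained by a greatest (resp. least) element. -/
def WitnessedP (T : Tnorm) {A P St : Type} (M : FLTS A P St) : Prop :=
  (∀ (α : PEProg A P) (φ : PForm A P) (x : St), ∃ y : St, ∀ z : St,
      T.mul (peSem T M α x z) (pformSem T M φ z) ≤
        T.mul (peSem T M α x y) (pformSem T M φ y)) ∧
  (∀ (γ : PUProg A P) (φ : PForm A P) (x : St), ∃ y : St, ∀ z : St,
      T.res (puSem T M γ x y) (pformSem T M φ y) ≤
        T.res (puSem T M γ x z) (pformSem T M φ z)) ∧
  (∀ (α β : PEProg A P) (x y : St), ∃ z : St, ∀ w : St,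
      T.mul (peSem T M α x w) (peSem T M β w y) ≤
        T.mul (peSem T M α x z) (peSem T M β z y)) ∧
  (∀ (α β : PUProg A P) (x y : St), ∃ z : St, ∀ w : St,
      T.mul (puSem T M α x w) (puSem T M β w y) ≤
        T.mul (puSem T M α x z) (puSem T M β z y)) ∧
  (∀ (α : PEProg A P) (x y : St), ∃ l : List St, l.getLastD x = y ∧
      ∀ l' : List St, l'.getLastD x = y →
        chainProd T (peSem T M α) x l' ≤ chainProd T (peSem T M α) x l) ∧
  (∀ (α : PUProg A P) (x y : St), ∃ l : List St, l.getLastD x = y ∧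
      ∀ l' : List St, l'.getLastD x = y →
        chainProd T (puSem T M α) x l' ≤ chainProd T (puSem T M α) x l)

/-- Formulas of fposΔK. -/
inductive PKForm (A P : Type) : Type
  | const : I → PKForm A P
  | prop : P → PKForm A P
  | baaz : PKForm A P → PKForm A P
  | and : PKForm A P → PKForm A P → PKForm A P
  | or : PKForm A P → PKForm A P → PKForm A P
  | impl : I → PKForm A P → PKForm A P
  | box : A → PKForm A P → PKForm A P
  | dia : A → PKForm A P → PKForm A P

/-- Semantics of fposΔK formulas. -/
def pkSem (T : Tnorm) {A P St : Type} (M : FLTS A P St) : PKForm A P → St → I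
  | .const a, _ => a
  | .prop p, x => M.label x p
  | .baaz φ, x => if pkSem T M φ x = 1 then 1 else 0
  | .and φ ψ, x => min (pkSem T M φ x) (pkSem T M ψ x)
  | .or φ ψ, x => max (pkSem T M φ x) (pkSem T M ψ x)
  | .impl a φ, x => T.res a (pkSem T M φ x)
  | .box ρ φ, x => ⨅ y, T.res (M.delta x ρ y) (pkSem T M φ y)
  | .dia ρ φ, x => ⨆ y, T.mul (M.delta x ρ y) (pkSem T M φ y)

/-- An FLTS is image-finite if every state has finitely many positive successors
for each action. -/
def ImageFinite {A P St : Type} (M : FLTS A P St) : Prop :=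
  ∀ (x : St) (ρ : A), {y : St | 0 < M.delta x ρ y}.Finite

namespace DirSimAux

theorem mul_zero' (T : Tnorm) (a : I) : T.mul a 0 = 0 := by
  have h : T.mul a 0 ≤ T.mul 1 0 := T.mul_le_mul unitInterval.le_one' le_rfl
  rw [T.mul_comm 1 0, T.mul_one] at h
  exact le_antisymm h unitInterval.nonneg'

theorem zero_mul' (T : Tnorm) (a : I) : T.mul 0 a = 0 := by
  rw [T.mul_comm, mul_zero']

theorem pos_left (T : Tnorm) {a b : I} (h : 0 < T.mul a b) : 0 < a := by
  rcases eq_or_lt_of_le (unitInterval.nonneg' (t := a)) with h0 | h0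
  · rw [← h0, zero_mul'] at h
    exact absurd h (lt_irrefl _)
  · exact h0

theorem pos_right (T : Tnorm) {a b : I} (h : 0 < T.mul a b) : 0 < b := by
  rw [T.mul_comm] at h
  exact pos_left T h

theorem mul_le_left (T : Tnorm) (a b : I) : T.mul a b ≤ a := by
  have h : T.mul a b ≤ T.mul a 1 := T.mul_le_mul le_rfl unitInterval.le_one'
  rwa [T.mul_one] at h

theorem res_mono (T : Tnorm) {a b c d : I} (h1 : b ≤ a) (h2 : c ≤ d) :
    T.res a c ≤ T.res b d := by
  apply sSup_le_sSup
  intro z hz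
  exact (T.mul_le_mul le_rfl h1).trans (le_trans hz h2)

theorem res_eq_one (T : Tnorm) {a b : I} (h : a ≤ b) : T.res a b = 1 := by
  apply le_antisymm unitInterval.le_one'
  apply le_sSup
  show T.mul 1 a ≤ b
  rw [T.mul_comm, T.mul_one]
  exact h

theorem le_of_res_eq_one (T : Tnorm) {a b : I} (h : T.res a b = 1) : a ≤ b := by
  have h1 : T.mul a (sSup {z : I | T.mul z a ≤ b}) = a := by
    change T.mul a (T.res a b) = a
    rw [h, T.mul_one]
  rw [T.left_continuous] at h1
  · rw [← h1]
    apply sSup_le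
    rintro _ ⟨z, hz, rfl⟩
    rw [T.mul_comm]
    exact hz
  · refine ⟨0, ?_⟩
    show T.mul 0 a ≤ b
    rw [zero_mul']
    exact unitInterval.nonneg'

section Preserve

variable {A P S S' : Type}

theorem star_follow (T : Tnorm) (Z : S → S' → Prop) (r : S → S → I) (r' : S' → S' → I)
    (hr : ∀ x x' y, Z x x' → 0 < r x y → ∃ y', r x y ≤ r' x' y' ∧ Z y y') :
    ∀ (l : List S) (x : S) (x' : S'), Z x x' → 0 < chainProd T r x l →
      ∃ l' : List S', chainProd T r x l ≤ chainProd T r' x' l' ∧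
        Z (l.getLastD x) (l'.getLastD x')
  | [], x, x', hZ, _ => ⟨[], le_rfl, by simpa using hZ⟩
  | y :: l, x, x', hZ, hpos => by
    obtain ⟨y', h1, h2⟩ := hr x x' y hZ (pos_left T hpos)
    obtain ⟨l', h3, h4⟩ := star_follow T Z r r' hr l y y' h2 (pos_right T hpos)
    refine ⟨y' :: l', T.mul_le_mul h1 h3, ?_⟩
    simpa only [List.getLastD_cons] using h4

theorem star_step (T : Tnorm) (Z : S → S' → Prop) (r : S → S → I) (r' : S' → S' → I)
    (hr : ∀ x x' y, Z x x' → 0 < r x y → ∃ y', r x y ≤ r' x' y' ∧ Z y y')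
    (hw : ∀ x y, ∃ l : List S, l.getLastD x = y ∧
      ∀ l' : List S, l'.getLastD x = y → chainProd T r x l' ≤ chainProd T r x l)
    (x : S) (x' : S') (y : S) (hZ : Z x x')
    (hpos : 0 < sSup {v : I | ∃ l : List S, l.getLastD x = y ∧ v = chainProd T r x l}) :
    ∃ y', sSup {v : I | ∃ l : List S, l.getLastD x = y ∧ v = chainProd T r x l} ≤
      sSup {v : I | ∃ l : List S', l.getLastD x' = y' ∧ v = chainProd T r' x' l} ∧ Z y y' := by
  obtain ⟨l, hl, hmax⟩ := hw x y
  have hle : sSup {v : I | ∃ l : List S, l.getLastD x = y ∧ v = chainProd T r x l} ≤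
      chainProd T r x l := by
    apply sSup_le
    rintro _ ⟨l', hl', rfl⟩
    exact hmax l' hl'
  obtain ⟨l', h1, h2⟩ := star_follow T Z r r' hr l x x' hZ (lt_of_lt_of_le hpos hle)
  refine ⟨l'.getLastD x', hle.trans (h1.trans (le_sSup ⟨l', rfl, rfl⟩)), ?_⟩
  rwa [hl] at h2

theorem comp_step (T : Tnorm) (Z : S → S' → Prop) (r s : S → S → I) (r' s' : S' → S' → I)
    (hr : ∀ x x' y, Z x x' → 0 < r x y → ∃ y', r x y ≤ r' x' y' ∧ Z y y')
    (hs : ∀ x x' y, Z x x' → 0 < s x y → ∃ y', s x y ≤ s' x' y' ∧ Z y y')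
    (hw : ∀ x y, ∃ z, ∀ w, T.mul (r x w) (s w y) ≤ T.mul (r x z) (s z y))
    (x : S) (x' : S') (y : S) (hZ : Z x x')
    (hpos : 0 < ⨆ z, T.mul (r x z) (s z y)) :
    ∃ y', (⨆ z, T.mul (r x z) (s z y)) ≤ (⨆ z, T.mul (r' x' z) (s' z y')) ∧ Z y y' := by
  obtain ⟨z, hz⟩ := hw x y
  have hle : (⨆ z, T.mul (r x z) (s z y)) ≤ T.mul (r x z) (s z y) := iSup_le hz
  have hp := lt_of_lt_of_le hpos hle
  obtain ⟨z', h1, h2⟩ := hr x x' z hZ (pos_left T hp)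
  obtain ⟨y', h3, h4⟩ := hs z z' y h2 (pos_right T hp)
  exact ⟨y', hle.trans ((T.mul_le_mul h1 h3).trans
    (le_iSup (fun z => T.mul (r' x' z) (s' z y')) z')), h4⟩

theorem union_step (Z : S → S' → Prop) (r s : S → S → I) (r' s' : S' → S' → I)
    (hr : ∀ x x' y, Z x x' → 0 < r x y → ∃ y', r x y ≤ r' x' y' ∧ Z y y')
    (hs : ∀ x x' y, Z x x' → 0 < s x y → ∃ y', s x y ≤ s' x' y' ∧ Z y y')
    (x : S) (x' : S') (y : S) (hZ : Z x x') (hpos : 0 < max (r x y) (s x y)) :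
    ∃ y', max (r x y) (s x y) ≤ max (r' x' y') (s' x' y') ∧ Z y y' := by
  rcases le_total (r x y) (s x y) with h | h
  · rw [max_eq_right h] at hpos ⊢
    obtain ⟨y', h1, h2⟩ := hs x x' y hZ hpos
    exact ⟨y', h1.trans (le_max_right _ _), h2⟩
  · rw [max_eq_left h] at hpos ⊢
    obtain ⟨y', h1, h2⟩ := hr x x' y hZ hpos
    exact ⟨y', h1.trans (le_max_left _ _), h2⟩

theorem baaz_mono {a b : I} (h : a ≤ b) :
    (if a = 1 then (1 : I) else 0) ≤ (if b = 1 then 1 else 0) := by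
  by_cases ha : a = 1
  · have hb : b = 1 := le_antisymm unitInterval.le_one' (ha ▸ h)
    rw [if_pos ha, if_pos hb]
  · rw [if_neg ha]
    exact unitInterval.nonneg'

mutual
theorem form_pres (T : Tnorm) (M : FLTS A P S) (M' : FLTS A P S')
    (hw : WitnessedP T M) (hw' : WitnessedP T M') (Z : S → S' → Prop)
    (hZ : IsDirSimulation M M' Z) :
    ∀ (φ : PForm A P) (x : S) (x' : S'), Z x x' → pformSem T M φ x ≤ pformSem T M' φ x'
  | .const a, x, x', h => by simp only [pformSem]; exact le_rfl
  | .prop p, x, x', h => by simp only [pformSem]; exact hZ.1 x x' h p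
  | .baaz φ, x, x', h => by
      have h1 := form_pres T M M' hw hw' Z hZ φ x x' h
      simp only [pformSem]; exact baaz_mono h1
  | .and φ ψ, x, x', h => by
      have h1 := form_pres T M M' hw hw' Z hZ φ x x' h
      have h2 := form_pres T M M' hw hw' Z hZ ψ x x' h
      simp only [pformSem]; exact min_le_min h1 h2
  | .or φ ψ, x, x', h => by
      have h1 := form_pres T M M' hw hw' Z hZ φ x x' h
      have h2 := form_pres T M M' hw hw' Z hZ ψ x x' h
      simp only [pformSem]; exact max_le_max h1 h2
  | .impl a φ, x, x', h => by
      have h1 := form_pres T M M' hw hw' Z hZ φ x x' h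
      simp only [pformSem]; exact res_mono T le_rfl h1
  | .dia α φ, x, x', h => by
      have h1 := form_pres T M M' hw hw' Z hZ φ
      have h2 := pe_pres T M M' hw hw' Z hZ α
      simp only [pformSem]
      apply iSup_le
      intro y
      rcases eq_or_lt_of_le (unitInterval.nonneg' (t := peSem T M α x y)) with h0 | h0
      · rw [← h0, zero_mul']
        exact unitInterval.nonneg'
      · obtain ⟨y', h3, h4⟩ := h2 x x' y h h0
        exact (T.mul_le_mul h3 (h1 y y' h4)).trans
          (le_iSup (fun y => T.mul (peSem T M' α x' y) (pformSem T M' φ y)) y')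
  | .box γ φ, x, x', h => by
      have h1 := form_pres T M M' hw hw' Z hZ φ
      have h2 := pu_pres T M M' hw hw' Z hZ γ
      simp only [pformSem]
      apply le_iInf
      intro y'
      rcases eq_or_lt_of_le (unitInterval.nonneg' (t := puSem T M' γ x' y')) with h0 | h0
      · rw [← h0, res_eq_one T unitInterval.nonneg']
        exact unitInterval.le_one'
      · obtain ⟨y, h3, h4⟩ := h2 x' x y' h h0
        exact (iInf_le (fun y => T.res (puSem T M γ x y) (pformSem T M φ y)) y).trans
          (res_mono T h3 (h1 y y' h4))
theorem pe_pres (T : Tnorm) (M : FLTS A P S) (M' : FLTS A P S')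
    (hw : WitnessedP T M) (hw' : WitnessedP T M') (Z : S → S' → Prop)
    (hZ : IsDirSimulation M M' Z) :
    ∀ (α : PEProg A P) (x : S) (x' : S') (y : S), Z x x' → 0 < peSem T M α x y →
      ∃ y', peSem T M α x y ≤ peSem T M' α x' y' ∧ Z y y'
  | .act ρ, x, x', y, h, hp => by
      simp only [peSem] at hp ⊢
      exact hZ.2.1 x y x' ρ h hp
  | .comp α β, x, x', y, h, hp => by
      have h1 := pe_pres T M M' hw hw' Z hZ α
      have h2 := pe_pres T M M' hw hw' Z hZ β
      simp only [peSem] at hp ⊢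
      exact comp_step T Z _ _ _ _ h1 h2 (hw.2.2.1 α β) x x' y h hp
  | .union α β, x, x', y, h, hp => by
      have h1 := pe_pres T M M' hw hw' Z hZ α
      have h2 := pe_pres T M M' hw hw' Z hZ β
      simp only [peSem] at hp ⊢
      exact union_step Z _ _ _ _ h1 h2 x x' y h hp
  | .star α, x, x', y, h, hp => by
      have h1 := pe_pres T M M' hw hw' Z hZ α
      simp only [peSem] at hp ⊢
      exact star_step T Z _ _ h1 (hw.2.2.2.2.1 α) x x' y h hp
  | .test φ, x, x', y, h, hp => by
      have h1 := form_pres T M M' hw hw' Z hZ φ x x' h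
      simp only [peSem] at hp ⊢
      by_cases hxy : x = y
      · subst hxy
        refine ⟨x', ?_, h⟩
        rw [if_pos rfl, if_pos rfl]
        exact h1
      · rw [if_neg hxy] at hp
        exact absurd hp (lt_irrefl _)
theorem pu_pres (T : Tnorm) (M : FLTS A P S) (M' : FLTS A P S')
    (hw : WitnessedP T M) (hw' : WitnessedP T M') (Z : S → S' → Prop)
    (hZ : IsDirSimulation M M' Z) :
    ∀ (γ : PUProg A P) (x' : S') (x : S) (y' : S'), Z x x' → 0 < puSem T M' γ x' y' →
      ∃ y, puSem T M' γ x' y' ≤ puSem T M γ x y ∧ Z y y'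
  | .act ρ, x', x, y', h, hp => by
      simp only [puSem] at hp ⊢
      exact hZ.2.2 x x' y' ρ h hp
  | .comp α β, x', x, y', h, hp => by
      have h1 := pu_pres T M M' hw hw' Z hZ α
      have h2 := pu_pres T M M' hw hw' Z hZ β
      simp only [puSem] at hp ⊢
      exact comp_step T (fun a b => Z b a) _ _ _ _ h1 h2 (hw'.2.2.2.1 α β) x' x y' h hp
  | .union α β, x', x, y', h, hp => by
      have h1 := pu_pres T M M' hw hw' Z hZ α
      have h2 := pu_pres T M M' hw hw' Z hZ β
      simp only [puSem] at hp ⊢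
      exact union_step (fun a b => Z b a) _ _ _ _ h1 h2 x' x y' h hp
  | .star α, x', x, y', h, hp => by
      have h1 := pu_pres T M M' hw hw' Z hZ α
      simp only [puSem] at hp ⊢
      exact star_step T (fun a b => Z b a) _ _ h1 (hw'.2.2.2.2.2 α) x' x y' h hp
  | .testImp φ a, x', x, y', h, hp => by
      have h1 := form_pres T M M' hw hw' Z hZ φ x x' h
      simp only [puSem] at hp ⊢
      by_cases hxy : x' = y'
      · subst hxy
        refine ⟨x, ?_, h⟩
        rw [if_pos rfl, if_pos rfl]
        exact res_mono T h1 le_rfl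
      · rw [if_neg hxy] at hp
        exact absurd hp (lt_irrefl _)
end

end Preserve

section Converse

variable {A P S S' : Type}

/-- Embedding of fposΔK into fposΔPDL. -/
def embed : PKForm A P → PForm A P
  | .const a => .const a
  | .prop p => .prop p
  | .baaz φ => .baaz (embed φ)
  | .and φ ψ => .and (embed φ) (embed ψ)
  | .or φ ψ => .or (embed φ) (embed ψ)
  | .impl a φ => .impl a (embed φ)
  | .box ρ φ => .box (.act ρ) (embed φ)
  | .dia ρ φ => .dia (.act ρ) (embed φ)

theorem embed_sem (T : Tnorm) (M : FLTS A P S) (φ : PKForm A P) :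
    ∀ x, pformSem T M (embed φ) x = pkSem T M φ x := by
  induction φ with
  | const a => intro x; simp only [embed, pformSem, pkSem]
  | prop p => intro x; simp only [embed, pformSem, pkSem]
  | baaz φ ih => intro x; simp only [embed, pformSem, pkSem, ih]
  | and φ ψ ih1 ih2 => intro x; simp only [embed, pformSem, pkSem, ih1, ih2]
  | or φ ψ ih1 ih2 => intro x; simp only [embed, pformSem, pkSem, ih1, ih2]
  | impl a φ ih => intro x; simp only [embed, pformSem, pkSem, ih]
  | box ρ φ ih => intro x; simp only [embed, pformSem, pkSem, puSem, ih]
  | dia ρ φ ih => intro x; simp only [embed, pformSem, pkSem, peSem, ih]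

theorem gap (M : FLTS A P S) (hf : ImageFinite M) (x : S) (ρ : A) (a : I) (ha : 0 < a) :
    ∃ c < a, ∀ y, M.delta x ρ y < a → M.delta x ρ y ≤ c := by
  have hfin : ((fun y => M.delta x ρ y) '' {y | 0 < M.delta x ρ y}).Finite := (hf x ρ).image _
  have hfin2 : (insert 0 ((fun y => M.delta x ρ y) '' {y | 0 < M.delta x ρ y}) ∩
      {v | v < a}).Finite := (hfin.insert 0).inter_of_left _
  obtain ⟨c, hc, hmax⟩ := hfin2.exists_maximalFor id _ ⟨0, Set.mem_insert _ _, ha⟩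
  refine ⟨c, hc.2, fun y hy => ?_⟩
  have hmem : M.delta x ρ y ∈ (insert 0 ((fun y => M.delta x ρ y) '' {y | 0 < M.delta x ρ y}) ∩
      {v | v < a}) := by
    refine ⟨?_, hy⟩
    rcases eq_or_lt_of_le (unitInterval.nonneg' (t := M.delta x ρ y)) with h0 | h0
    · rw [← h0]; exact Set.mem_insert _ _
    · exact Set.mem_insert_of_mem _ ⟨y, h0, rfl⟩
  rcases le_total (M.delta x ρ y) c with h | h
  · exact h
  · exact hmax hmem h

theorem sep (T : Tnorm) (M : FLTS A P S) (M' : FLTS A P S') (y : S) (y' : S')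
    (h : ¬ ∀ φ : PKForm A P, pkSem T M φ y ≤ pkSem T M' φ y') :
    ∃ ψ : PKForm A P, pkSem T M ψ y = 1 ∧ pkSem T M' ψ y' = 0 := by
  rw [not_forall] at h
  obtain ⟨φ, hφ⟩ := h
  refine ⟨.baaz (.impl (pkSem T M φ y) φ), ?_, ?_⟩
  · rw [pkSem]
    exact if_pos (res_eq_one T le_rfl)
  · rw [pkSem]
    exact if_neg (fun h => hφ (le_of_res_eq_one T h))

theorem sep_and (T : Tnorm) (M : FLTS A P S) (M' : FLTS A P S') (y : S) (F : Set S')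
    (hF : F.Finite)
    (h : ∀ y' ∈ F, ∃ ψ : PKForm A P, pkSem T M ψ y = 1 ∧ pkSem T M' ψ y' = 0) :
    ∃ ψ : PKForm A P, pkSem T M ψ y = 1 ∧ ∀ y' ∈ F, pkSem T M' ψ y' = 0 := by
  have hne : Nonempty (PKForm A P) := ⟨.const 0⟩
  choose! f hf using h
  have key : ∀ s : List S', (∀ y' ∈ s, y' ∈ F) →
      ∃ ψ : PKForm A P, pkSem T M ψ y = 1 ∧ ∀ y' ∈ s, pkSem T M' ψ y' = 0 := by
    intro s
    induction s with
    | nil =>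
      intro _
      exact ⟨.const 1, by simp only [pkSem], by simp⟩
    | cons b s ih =>
      intro hs
      obtain ⟨ψ, h1, h2⟩ := ih (fun y' hy' => hs y' (List.mem_cons_of_mem _ hy'))
      have hb := hf b (hs b List.mem_cons_self)
      refine ⟨.and (f b) ψ, ?_, ?_⟩
      · simp only [pkSem, h1, hb.1, min_self]
      · intro y' hy'
        simp only [pkSem]
        rcases List.mem_cons.1 hy' with rfl | hy'
        · rw [hb.2]; exact min_eq_left unitInterval.nonneg'
        · rw [h2 y' hy']; exact min_eq_right unitInterval.nonneg'
  obtain ⟨ψ, h1, h2⟩ := key hF.toFinset.toList (by simp)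
  exact ⟨ψ, h1, fun y' hy' => h2 y' (by simpa using hy')⟩

theorem sep_or (T : Tnorm) (M : FLTS A P S) (M' : FLTS A P S') (y' : S') (F : Set S)
    (hF : F.Finite)
    (h : ∀ y ∈ F, ∃ ψ : PKForm A P, pkSem T M ψ y = 1 ∧ pkSem T M' ψ y' = 0) :
    ∃ ψ : PKForm A P, (∀ y ∈ F, pkSem T M ψ y = 1) ∧ pkSem T M' ψ y' = 0 := by
  have hne : Nonempty (PKForm A P) := ⟨.const 0⟩
  choose! f hf using h
  have key : ∀ s : List S, (∀ y ∈ s, y ∈ F) →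
      ∃ ψ : PKForm A P, (∀ y ∈ s, pkSem T M ψ y = 1) ∧ pkSem T M' ψ y' = 0 := by
    intro s
    induction s with
    | nil =>
      intro _
      exact ⟨.const 0, by simp, by simp only [pkSem]⟩
    | cons b s ih =>
      intro hs
      obtain ⟨ψ, h1, h2⟩ := ih (fun y' hy' => hs y' (List.mem_cons_of_mem _ hy'))
      have hb := hf b (hs b List.mem_cons_self)
      refine ⟨.or (f b) ψ, ?_, ?_⟩
      · intro y hy
        simp only [pkSem]
        rcases List.mem_cons.1 hy with rfl | hy
        · rw [hb.1]; exact max_eq_left unitInterval.le_one'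
        · rw [h1 y hy]; exact max_eq_right unitInterval.le_one'
      · simp only [pkSem, h2, hb.2, max_self]
  obtain ⟨ψ, h1, h2⟩ := key hF.toFinset.toList (by simp)
  exact ⟨ψ, fun y hy => h1 y (by simpa using hy), h2⟩

theorem hm (T : Tnorm) (M : FLTS A P S) (M' : FLTS A P S')
    (hf : ImageFinite M) (hf' : ImageFinite M') :
    IsDirSimulation M M' (fun x x' => ∀ φ : PKForm A P, pkSem T M φ x ≤ pkSem T M' φ x') := by
  refine ⟨?_, ?_, ?_⟩
  · intro x x' h p
    have h1 := h (.prop p)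
    simpa only [pkSem] using h1
  · intro x y x' ρ h ha
    by_contra hcon
    push Not at hcon
    obtain ⟨c, hca, hc⟩ := gap M' hf' x' ρ _ ha
    have hfin : {y' | M.delta x ρ y ≤ M'.delta x' ρ y'}.Finite :=
      (hf' x' ρ).subset (fun y' hy' => lt_of_lt_of_le ha hy')
    obtain ⟨ψ, h1, h2⟩ := sep_and T M M' y _ hfin (fun y' hy' => by
      apply sep
      obtain ⟨φ, hφ⟩ := hcon y' hy'
      intro hall
      exact absurd (hall φ) (not_le_of_gt hφ))
    have h3 := h (.dia ρ ψ)
    simp only [pkSem] at h3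
    have h4 : M.delta x ρ y ≤ ⨆ y, T.mul (M.delta x ρ y) (pkSem T M ψ y) := by
      have h5 := le_iSup (fun y => T.mul (M.delta x ρ y) (pkSem T M ψ y)) y
      simp only [h1, T.mul_one] at h5
      exact h5
    have h6 : (⨆ y', T.mul (M'.delta x' ρ y') (pkSem T M' ψ y')) ≤ c := by
      apply iSup_le
      intro y'
      by_cases hy : M.delta x ρ y ≤ M'.delta x' ρ y'
      · rw [h2 y' hy, mul_zero']
        exact unitInterval.nonneg'
      · exact (mul_le_left T _ _).trans (hc y' (lt_of_not_ge hy))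
    exact absurd (h4.trans (h3.trans h6)) (not_le_of_gt hca)
  · intro x x' y' ρ h ha
    by_contra hcon
    push Not at hcon
    obtain ⟨c, hca, hc⟩ := gap M hf x ρ _ ha
    have hfin : {y | M'.delta x' ρ y' ≤ M.delta x ρ y}.Finite :=
      (hf x ρ).subset (fun y hy => lt_of_lt_of_le ha hy)
    obtain ⟨ψ, h1, h2⟩ := sep_or T M M' y' _ hfin (fun y hy => by
      apply sep
      obtain ⟨φ, hφ⟩ := hcon y hy
      intro hall
      exact absurd (hall φ) (not_le_of_gt hφ))
    have h3 := h (.box ρ (.or ψ (.const c)))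
    simp only [pkSem] at h3
    have h4 : (1 : I) ≤ ⨅ y, T.res (M.delta x ρ y) (max (pkSem T M ψ y) c) := by
      apply le_iInf
      intro y
      rw [res_eq_one]
      by_cases hy : M'.delta x' ρ y' ≤ M.delta x ρ y
      · rw [h1 y hy]
        exact unitInterval.le_one'.trans (le_max_left _ _)
      · exact (hc y (lt_of_not_ge hy)).trans (le_max_right _ _)
    have h5 := h4.trans (h3.trans
      (iInf_le (fun y' => T.res (M'.delta x' ρ y') (max (pkSem T M' ψ y') c)) y'))
    have h6 := le_of_res_eq_one T (le_antisymm unitInterval.le_one' h5)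
    rw [h2, max_eq_right unitInterval.nonneg'] at h6
    exact absurd h6 (not_le_of_gt hca)

end Converse

end DirSimAux

/-- For image-finite FLTSs witnessed w.r.t. fposΔPDL, the following are equivalent:
(i) `x ≤^pos x'` (w.r.t. all fposΔPDL formulas),
(ii) there is a crisp directed simulation linking `x` to `x'`,
(iii) `x ≤^pos_K x'` (w.r.t. all fposΔK formulas). -/
theorem dirSimulation_characterization_fposPDL_fposK
    {A P S S' : Type} [Nonempty A] [Nonempty P] [Nonempty S] [Nonempty S']
    (T : Tnorm) (M : FLTS A P S) (M' : FLTS A P S')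
    (hfM : ImageFinite M) (hfM' : ImageFinite M')
    (hwM : WitnessedP T M) (hwM' : WitnessedP T M')
    (x : S) (x' : S') :
    ((∀ φ : PForm A P, pformSem T M φ x ≤ pformSem T M' φ x') ↔
      (∃ Z : S → S' → Prop, IsDirSimulation M M' Z ∧ Z x x')) ∧
    ((∃ Z : S → S' → Prop, IsDirSimulation M M' Z ∧ Z x x') ↔
      (∀ φ : PKForm A P, pkSem T M φ x ≤ pkSem T M' φ x')) := by
  have h12 : (∃ Z : S → S' → Prop, IsDirSimulation M M' Z ∧ Z x x') →
      ∀ φ : PForm A P, pformSem T M φ x ≤ pformSem T M' φ x' := by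
    rintro ⟨Z, hZ, hx⟩ φ
    exact DirSimAux.form_pres T M M' hwM hwM' Z hZ φ x x' hx
  have h13 : (∀ φ : PForm A P, pformSem T M φ x ≤ pformSem T M' φ x') →
      ∀ φ : PKForm A P, pkSem T M φ x ≤ pkSem T M' φ x' := by
    intro h φ
    rw [← DirSimAux.embed_sem, ← DirSimAux.embed_sem]
    exact h _
  have h32 : (∀ φ : PKForm A P, pkSem T M φ x ≤ pkSem T M' φ x') →
      ∃ Z : S → S' → Prop, IsDirSimulation M M' Z ∧ Z x x' :=
    fun h => ⟨_, DirSimAux.hm T M M' hfM hfM', h⟩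
  exact ⟨⟨fun h => h32 (h13 h), h12⟩, ⟨fun h => h13 (h12 h), h32⟩⟩
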